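/- Let X be a finite simplicial complex and let M be an acyclic matching on X such that no critical simplex of M has dimension > k. Let M̃ be the matching obtained from M by removing all arcs (σ → τ) with dim σ ≤ k. Then M̃ is an acyclic matching on X, every critical simplex of M̃ has dimension ≤ k, and the set of critical simplices of M̃ forms a subcomplex of X (i.e., it is closed under taking nonempty subsets). -/

import Mathlib

/-!
Every subset `N` of an acyclic matching `M` is again an acyclic matching. Give each simplex its
dimension, plus one if it is the lower end of an arc of `N`. Arcs of `H(X)^N` never increase this
level: it is constant along reversed arcs because no simplex is both an upper and a lower end, and
an arc of `M` left unreversed in `H(X)^N` strictly decreases it because its lower end is matched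
with no other simplex. A directed cycle of `H(X)^N` therefore avoids the latter arcs, so it is a
cycle of `H(X)^M`.

An arc `(σ, τ)` of `M` survives pruning iff `dim σ > k`. So every arc through a simplex of dimension
`> k` survives, and pruning creates no critical simplex there; and both ends of a surviving arc have
dimension `≥ k`, so all simplices of dimension `< k` become critical, in particular all proper faces
of a simplex of dimension `≤ k`.
-/

open Finset

/-- A (finite) simplicial complex: a finite collection of nonempty finite sets
    of vertices, closed under taking nonempty subsets. -/
def IsComplex {U : Type*} [DecidableEq U] (X : Finset (Finset U)) : Prop :=
  (∀ σ ∈ X, σ ≠ ∅) ∧ ∀ σ ∈ X, ∀ τ : Finset U, τ ⊆ σ → τ ≠ ∅ → τ ∈ X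

/-- Arc of the Hasse diagram `H(X)`: from `σ` to `τ` iff `τ ⊂ σ` and
    `dim σ = dim τ + 1` (i.e. `|σ| = |τ| + 1`). -/
def HasseArc {U : Type*} [DecidableEq U] (X : Finset (Finset U)) (σ τ : Finset U) : Prop :=
  σ ∈ X ∧ τ ∈ X ∧ τ ⊂ σ ∧ σ.card = τ.card + 1

/-- A matching on `X`: a set of arcs of `H(X)` such that every simplex of `X`
    belongs to at most one arc. -/
def IsMatching {U : Type*} [DecidableEq U] (X : Finset (Finset U))
    (M : Set (Finset U × Finset U)) : Prop :=
  (∀ p ∈ M, HasseArc X p.1 p.2) ∧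
  ∀ p ∈ M, ∀ q ∈ M, p ≠ q → p.1 ≠ q.1 ∧ p.1 ≠ q.2 ∧ p.2 ≠ q.1 ∧ p.2 ≠ q.2

/-- Arc of the modified Hasse diagram `H(X)^M`, obtained from `H(X)` by
    reversing the direction of each arc in `M`. -/
def ModArc {U : Type*} [DecidableEq U] (X : Finset (Finset U))
    (M : Set (Finset U × Finset U)) (a b : Finset U) : Prop :=
  (HasseArc X a b ∧ (a, b) ∉ M) ∨ (b, a) ∈ M

/-- An acyclic matching: a matching such that `H(X)^M` has no directed cycle. -/
def IsAcyclicMatching {U : Type*} [DecidableEq U] (X : Finset (Finset U))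
    (M : Set (Finset U × Finset U)) : Prop :=
  IsMatching X M ∧ ∀ a : Finset U, ¬ Relation.TransGen (ModArc X M) a a

/-- `σ` is a critical simplex of the matching `M` on `X`: it belongs to no arc of `M`. -/
def IsCritical {U : Type*} [DecidableEq U] (X : Finset (Finset U))
    (M : Set (Finset U × Finset U)) (σ : Finset U) : Prop :=
  σ ∈ X ∧ ∀ p ∈ M, p.1 ≠ σ ∧ p.2 ≠ σ

/-- `X` has dimension exactly `d` (the dimension of a simplex `σ` is `|σ| - 1`). -/
def HasDim {U : Type*} [DecidableEq U] (X : Finset (Finset U)) (d : ℕ) : Prop :=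
  (∀ σ ∈ X, σ.card ≤ d + 1) ∧ ∃ σ ∈ X, σ.card = d + 1

/-- The complex `X' = X ∪ { σ ∪ {wᵢ} : σ ∈ X ∪ {∅}, i = 1, …, n+1 }`, obtained
    from `X` by attaching `n+1` cones with apexes `w 0, …, w n`. -/
def coneCx {U : Type*} [DecidableEq U] (X : Finset (Finset U)) (n : ℕ)
    (w : Fin (n + 1) → U) : Finset (Finset U) :=
  X ∪ Finset.univ.biUnion (fun i : Fin (n + 1) =>
    (insert (∅ : Finset U) X).image (fun σ => insert (w i) σ))

section Relation

variable {α β : Type*} [Preorder β] {f : α → β} {r s : α → α → Prop}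

theorem lt_or_le_and_transGen_of_transGen
    (h : ∀ a b, r a b → f b < f a ∨ f b ≤ f a ∧ s a b) {a b : α} (hab : Relation.TransGen r a b) :
    f b < f a ∨ f b ≤ f a ∧ Relation.TransGen s a b := by
  induction hab with
  | single hab => exact (h _ _ hab).imp_right (And.imp_right .single)
  | tail _ hbc ih =>
    rcases ih, h _ _ hbc with ⟨hlt | ⟨hle, hs⟩, hlt' | ⟨hle', hs'⟩⟩
    · exact .inl (hlt'.trans hlt)
    · exact .inl (hle'.trans_lt hlt)
    · exact .inl (hlt'.trans_le hle)
    · exact .inr ⟨hle'.trans hle, hs.tail hs'⟩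

end Relation

section Matching

variable {U : Type*} {M N : Set (Finset U × Finset U)} {ρ σ τ : Finset U}

open Classical in
/-- The level of a simplex with respect to a matching: its cardinality, raised by one if it is the
lower end of an arc. It serves as a monovariant along directed paths of `H(X)^M`. -/
noncomputable def matchingLevel (M : Set (Finset U × Finset U)) (σ : Finset U) : ℕ :=
  σ.card + if ∃ ρ, (ρ, σ) ∈ M then 1 else 0

theorem card_le_matchingLevel (M : Set (Finset U × Finset U)) (σ : Finset U) :
    σ.card ≤ matchingLevel M σ :=
  Nat.le_add_right _ _

theorem matchingLevel_le_card_add_one (M : Set (Finset U × Finset U)) (σ : Finset U) :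
    matchingLevel M σ ≤ σ.card + 1 := by
  unfold matchingLevel
  split_ifs <;> lia

theorem matchingLevel_eq_card (h : ∀ ρ, (ρ, σ) ∉ M) : matchingLevel M σ = σ.card := by
  simp [matchingLevel, h]

variable [DecidableEq U] {X : Finset (Finset U)}

theorem IsMatching.subset (hM : IsMatching X M) (hNM : N ⊆ M) : IsMatching X N :=
  ⟨fun p hp => hM.1 p (hNM hp), fun p hp q hq => hM.2 p (hNM hp) q (hNM hq)⟩

theorem IsMatching.card_eq (hM : IsMatching X M) (h : (σ, τ) ∈ M) : σ.card = τ.card + 1 :=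
  (hM.1 _ h).2.2.2

theorem IsMatching.left_unique (hM : IsMatching X M) (hρ : (ρ, τ) ∈ M) (hσ : (σ, τ) ∈ M) :
    ρ = σ := by
  by_contra hne
  exact (hM.2 _ hρ _ hσ fun h => hne (congrArg Prod.fst h)).2.2.2 rfl

theorem IsMatching.notMem_of_mem (hM : IsMatching X M) (h : (σ, τ) ∈ M) : (ρ, σ) ∉ M := by
  intro h'
  have hne : (ρ, σ) ≠ (σ, τ) := by
    rintro ⟨⟩
    exact absurd (hM.card_eq h) (by lia)
  exact (hM.2 _ h' _ h hne).2.2.1 rfl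

theorem HasseArc.matchingLevel_le (h : HasseArc X σ τ) (M : Set (Finset U × Finset U)) :
    matchingLevel M τ ≤ matchingLevel M σ :=
  calc
    matchingLevel M τ ≤ τ.card + 1 := matchingLevel_le_card_add_one M τ
    _ = σ.card := h.2.2.2.symm
    _ ≤ matchingLevel M σ := card_le_matchingLevel M σ

theorem HasseArc.matchingLevel_lt (h : HasseArc X σ τ) (hτ : ∀ ρ, (ρ, τ) ∉ M) :
    matchingLevel M τ < matchingLevel M σ :=
  calc
    matchingLevel M τ = τ.card := matchingLevel_eq_card hτ
    _ < σ.card := Finset.card_lt_card h.2.2.1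
    _ ≤ matchingLevel M σ := card_le_matchingLevel M σ

theorem IsMatching.matchingLevel_eq_of_mem (hM : IsMatching X M) (h : (σ, τ) ∈ M) :
    matchingLevel M σ = matchingLevel M τ :=
  calc
    matchingLevel M σ = σ.card := matchingLevel_eq_card fun _ => hM.notMem_of_mem h
    _ = τ.card + 1 := hM.card_eq h
    _ = matchingLevel M τ := by rw [matchingLevel, if_pos ⟨σ, h⟩]

theorem ModArc.matchingLevel_lt_or_le (hM : IsMatching X M) (hNM : N ⊆ M) (h : ModArc X N σ τ) :
    matchingLevel N τ < matchingLevel N σ ∨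
      matchingLevel N τ ≤ matchingLevel N σ ∧ ModArc X M σ τ := by
  rcases h with ⟨harc, hN⟩ | hN
  · by_cases hστ : (σ, τ) ∈ M
    · have hτ : ∀ ρ, (ρ, τ) ∉ N := by
        intro ρ hρ
        obtain rfl := hM.left_unique (hNM hρ) hστ
        exact hN hρ
      exact .inl (harc.matchingLevel_lt hτ)
    · exact .inr ⟨harc.matchingLevel_le N, .inl ⟨harc, hστ⟩⟩
  · exact .inr ⟨((hM.subset hNM).matchingLevel_eq_of_mem hN).le, .inr (hNM hN)⟩

theorem IsAcyclicMatching.subset (hM : IsAcyclicMatching X M) (hNM : N ⊆ M) :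
    IsAcyclicMatching X N := by
  refine ⟨hM.1.subset hNM, fun a hcycle => ?_⟩
  rcases lt_or_le_and_transGen_of_transGen
    (fun _ _ harc => harc.matchingLevel_lt_or_le hM.1 hNM) hcycle with hlt | ⟨-, hcycle'⟩
  · exact lt_irrefl _ hlt
  · exact hM.2 a hcycle'

end Matching

section Prune

variable {U : Type*}

/-- The arcs of `M` whose upper end has more than `n` vertices, that is, dimension at least `n`. The
condition is written as a negation so that `prune M (k + 1)` unfolds to the set `M̃` of
`prune_matching`. -/
def prune (M : Set (Finset U × Finset U)) (n : ℕ) : Set (Finset U × Finset U) :=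
  {p ∈ M | ¬ p.1.card ≤ n}

theorem prune_subset (M : Set (Finset U × Finset U)) (n : ℕ) : prune M n ⊆ M :=
  fun _ hp => hp.1

variable [DecidableEq U] {X : Finset (Finset U)} {M : Set (Finset U × Finset U)} {n : ℕ}
  {σ : Finset U}

theorem IsCritical.of_prune (hM : ∀ p ∈ M, HasseArc X p.1 p.2)
    (hσ : IsCritical X (prune M n) σ) (hn : n < σ.card) : IsCritical X M σ := by
  refine ⟨hσ.1, fun p hp => ?_⟩
  have hcard : p.1.card = p.2.card + 1 := (hM p hp).2.2.2
  constructor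
  · rintro rfl
    exact (hσ.2 p ⟨hp, by lia⟩).1 rfl
  · rintro rfl
    exact (hσ.2 p ⟨hp, by lia⟩).2 rfl

theorem isCritical_prune_of_card_lt (hM : ∀ p ∈ M, HasseArc X p.1 p.2) (hσ : σ ∈ X)
    (hn : σ.card < n) : IsCritical X (prune M n) σ := by
  refine ⟨hσ, fun p hp => ?_⟩
  have hcard : p.1.card = p.2.card + 1 := (hM p hp.1).2.2.2
  have hlarge : ¬ p.1.card ≤ n := hp.2
  constructor <;> rintro rfl <;> lia

end Prune

/-- removing from an acyclic matching `M` (with no critical simplex of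
    dimension > k) all arcs `(σ → τ)` with `dim σ ≤ k` yields an acyclic matching `M̃`
    whose critical simplices have dimension ≤ k and form a subcomplex of `X`. -/
theorem prune_matching {U : Type*} [DecidableEq U] (k : ℕ)
    (X : Finset (Finset U)) (hX : IsComplex X)
    (M : Set (Finset U × Finset U)) (hM : IsAcyclicMatching X M)
    (hcrit : ∀ σ, IsCritical X M σ → σ.card ≤ k + 1) :
    IsAcyclicMatching X {p ∈ M | ¬ p.1.card ≤ k + 1} ∧
    (∀ σ, IsCritical X {p ∈ M | ¬ p.1.card ≤ k + 1} σ → σ.card ≤ k + 1) ∧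
    (∀ σ, IsCritical X {p ∈ M | ¬ p.1.card ≤ k + 1} σ →
      ∀ τ : Finset U, τ ⊆ σ → τ ≠ ∅ → IsCritical X {p ∈ M | ¬ p.1.card ≤ k + 1} τ) := by
  have harc : ∀ p ∈ M, HasseArc X p.1 p.2 := hM.1.1
  have hdim : ∀ σ, IsCritical X (prune M (k + 1)) σ → σ.card ≤ k + 1 := by
    intro σ hσ
    by_contra! hlarge
    exact hlarge.not_ge (hcrit σ (hσ.of_prune harc hlarge))
  refine ⟨hM.subset (prune_subset M (k + 1)), hdim, fun σ hσ τ hτσ hτ => ?_⟩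
  rcases hτσ.eq_or_ssubset with rfl | hssub
  · exact hσ
  · have hcard : τ.card < k + 1 := (Finset.card_lt_card hssub).trans_le (hdim σ hσ)
    exact isCritical_prune_of_card_lt harc (hX.2 σ hσ.1 τ hτσ hτ) hcard
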